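/- Let Z = 2P_1 + ... + 2P_7 be a set of seven non-degenerate double points in P^4 (i.e., P_1,...,P_7 span P^4) over an algebraically closed field. Then reg(Z) ≥ 4. -/

import Mathlib

open MvPolynomial

noncomputable section

/-- The defining prime ideal of the point of projective space with homogeneous
coordinates `p`: the ideal generated by the linear forms vanishing at `p`. -/
def pointIdeal {K : Type} [Field K] {N : ℕ} (p : Fin N → K) :
    Ideal (MvPolynomial (Fin N) K) :=
  Ideal.span {f | f.IsHomogeneous 1 ∧ eval p f = 0}

/-- The ideal of the fat point scheme `m₁P₁ + ⋯ + m_sP_s`. -/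
def fatIdeal {K : Type} [Field K] {N s : ℕ} (p : Fin s → Fin N → K) (m : Fin s → ℕ) :
    Ideal (MvPolynomial (Fin N) K) :=
  ⨅ i, pointIdeal (p i) ^ (m i)

/-- `dim_K` of the degree-`t` graded piece of the ideal `I`. -/
def gradedDim (K : Type) [Field K] {N : ℕ} (I : Ideal (MvPolynomial (Fin N) K)) (t : ℕ) : ℕ :=
  Module.finrank K ↥(homogeneousSubmodule (Fin N) K t ⊓ I.restrictScalars K)

/-- The Hilbert function of `R/I` in degree `t`. -/
def hilbFn (K : Type) [Field K] {N : ℕ} (I : Ideal (MvPolynomial (Fin N) K)) (t : ℕ) : ℕ :=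
  Module.finrank K ↥(homogeneousSubmodule (Fin N) K t) - gradedDim K I t

/-- The regularity index of `R/I` relative to the multiplicity `e`:
the least `t` with `H_{R/I}(t) = e`. -/
def regIndex (K : Type) [Field K] {N : ℕ} (I : Ideal (MvPolynomial (Fin N) K)) (e : ℕ) : ℕ :=
  sInf {t | hilbFn K I t = e}

/-- The multiplicity `e(R/I) = ∑ C(mᵢ+n-1, n)` of a fat point scheme in `ℙⁿ`. -/
def fatMult (n : ℕ) {s : ℕ} (m : Fin s → ℕ) : ℕ :=
  ∑ i, (m i + n - 1).choose n

/-- The regularity index of the fat point scheme `m₁P₁ + ⋯ + m_sP_s` in `ℙⁿ`. -/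
def regFat (K : Type) [Field K] {n s : ℕ} (p : Fin s → Fin (n + 1) → K) (m : Fin s → ℕ) : ℕ :=
  regIndex K (fatIdeal p m) (fatMult n m)

/-- The coordinate vectors `p i` represent distinct points of projective space. -/
def ProjDistinct {K : Type} [Field K] {N s : ℕ} (p : Fin s → Fin N → K) : Prop :=
  (∀ i, p i ≠ 0) ∧ ∀ i j, i ≠ j → ∀ c : K, p i ≠ c • p j

/-- The points `p i`, `i ∈ Q`, lie on a `j`-dimensional linear subspace of `ℙⁿ`. -/
def OnLinearSubspace {K : Type} [Field K] {N s : ℕ} (p : Fin s → Fin N → K)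
    (Q : Finset (Fin s)) (j : ℕ) : Prop :=
  ∃ W : Submodule K (Fin N → K), Module.finrank K ↥W ≤ j + 1 ∧ ∀ i ∈ Q, p i ∈ W

open Classical in
/-- The Segre bound `T(Z) = max {T_j(Z) | j = 1,…,n}` for fat points in `ℙⁿ`. -/
def segreBound {K : Type} [Field K] (n : ℕ) {s : ℕ} (p : Fin s → Fin (n + 1) → K)
    (m : Fin s → ℕ) : ℕ :=
  (Finset.Icc 1 n).sup fun j =>
    Finset.univ.powerset.sup fun Q =>
      if Q.Nonempty ∧ OnLinearSubspace p Q j then (∑ i ∈ Q, m i + j - 2) / j else 0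

/-- The standard coordinate point `(1,0,…,0)`. -/
def stdPt (K : Type) [Field K] (N : ℕ) : Fin N → K := fun j => if (j : ℕ) = 0 then 1 else 0

/-!
Seven points of `ℙ⁴` always admit a cubic form that is singular at all of them. If some five of
the points lie on a hyperplane, multiply the equation of that hyperplane by a quadric passing
through the five points whose vertex contains the other two: quadrics with such a vertex depend on
`6` coefficients. Otherwise the seven points lie on a rational normal quartic curve, and the secant
variety of that curve, cut out by a `3 × 3` determinant whose matrix has rank one along the curve,
is such a cubic. Hence the Hilbert function of `R/I` is less than `dim R₃ = 35` in degree `3`, while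
in degrees `t ≤ 2` it is at most `dim R_t ≤ 15`.

As the infimum of the empty set is `0`, it also matters that the value `35` is attained. Each double
point imposes at most five conditions on forms of positive degree, and in degree `13` all these
conditions are independent: multiply an arbitrary linear form by the square of a product of six
linear forms that do not vanish at one of the points and vanish at one of the other six points each.
-/

open Module

section Forms

variable {K : Type*} [Field K] {N t : ℕ}

instance finite_homogeneousSubmodule :
    Module.Finite K (homogeneousSubmodule (Fin N) K t) :=
  Module.Finite.iff_fg.2 (homogeneousSubmodule_fg _ _ t)

lemma finrank_homogeneousSubmodule (K : Type*) [Field K] (N t : ℕ) :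
    finrank K (homogeneousSubmodule (Fin N) K t) = (N + t - 1).choose t := by
  have hdeg : {d : Fin N →₀ ℕ | d.degree = t} =
      ((Finset.univ.finsuppAntidiag t : Finset (Fin N →₀ ℕ)) : Set (Fin N →₀ ℕ)) := by
    ext d
    simp [Finsupp.degree_eq_sum]
  rw [homogeneousSubmodule_eq_finsupp_supported, hdeg,
    (AddMonoidAlgebra.supportedEquivFinsupp _).finrank_eq, finrank_finsupp_self,
    ← Set.toFinset_card, Finset.toFinset_coe,
    Finset.card_finsuppAntidiag_nat_eq_choose, Finset.card_fin]

lemma exists_isHomogeneous_one_eval_eq (φ : Dual K (Fin N → K)) :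
    ∃ ℓ : MvPolynomial (Fin N) K, ℓ.IsHomogeneous 1 ∧ ∀ x, eval x ℓ = φ x := by
  refine ⟨(LinearMap.toMatrix' (LinearMap.pi fun _ : Unit => φ)).toMvPolynomial (),
    Matrix.toMvPolynomial_isHomogeneous _ _, fun x => ?_⟩
  rw [Matrix.toMvPolynomial_eval_eq_apply, LinearMap.toMatrix'_mulVec, LinearMap.pi_apply]

lemma exists_isHomogeneous_one_eval_eq_one {q r : Fin N → K} (h : ∀ c : K, q ≠ c • r) :
    ∃ ℓ : MvPolynomial (Fin N) K, ℓ.IsHomogeneous 1 ∧ eval q ℓ = 1 ∧ eval r ℓ = 0 := by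
  have hq : q ∉ Submodule.span K {r} := fun hq =>
    let ⟨c, hc⟩ := Submodule.mem_span_singleton.1 hq
    h c hc.symm
  obtain ⟨φ, hφq, hφr⟩ := Submodule.exists_le_ker_of_notMem hq
  obtain ⟨ℓ, hℓ, heval⟩ := exists_isHomogeneous_one_eval_eq ((φ q)⁻¹ • φ)
  have hr : φ r = 0 := hφr (Submodule.mem_span_singleton_self r)
  exact ⟨ℓ, hℓ, by simp [heval, hφq], by simp [heval, hr]⟩

lemma eq_zero_of_isHomogeneous_one {ℓ : MvPolynomial (Fin N) K} (hℓ : ℓ.IsHomogeneous 1)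
    {q : Fin N → K} (h : ∀ m, eval q (pderiv m ℓ) = 0) : ℓ = 0 := by
  have hpderiv : ∀ m, pderiv m ℓ = 0 := fun m => by
    have hconst := totalDegree_eq_zero_iff_eq_C.1
      ((totalDegree_zero_iff_isHomogeneous _).2 (hℓ.pderiv (i := m)))
    have hcoeff := h m
    rw [hconst, eval_C] at hcoeff
    rw [hconst, hcoeff, C_0]
  simpa [hpderiv] using hℓ.sum_X_mul_pderiv.symm

lemma exists_isHomogeneous_ne_zero_of_card_lt {ι : Type*} [Fintype ι] (x : ι → Fin N → K)
    (h : Fintype.card ι < (N + t - 1).choose t) :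
    ∃ F : MvPolynomial (Fin N) K, F ≠ 0 ∧ F.IsHomogeneous t ∧ ∀ i, eval (x i) F = 0 := by
  let evals : homogeneousSubmodule (Fin N) K t →ₗ[K] ι → K :=
    LinearMap.pi fun i => (aeval (x i)).toLinearMap ∘ₗ (homogeneousSubmodule (Fin N) K t).subtype
  have hker : LinearMap.ker evals ≠ ⊥ := LinearMap.ker_ne_bot_of_finrank_lt (by
    rwa [finrank_fintype_fun_eq_card, finrank_homogeneousSubmodule])
  obtain ⟨F, hF, hF0⟩ := Submodule.exists_mem_ne_zero_of_ne_bot hker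
  exact ⟨F, by simpa using hF0, F.2, fun i => congrFun hF i⟩

end Forms

section HilbertFunction

lemma finrank_range_pi_le {k V ι : Type*} [Field k] [AddCommGroup V] [Module k V]
    [FiniteDimensional k V] [Fintype ι] {W : ι → Type*} [∀ i, AddCommGroup (W i)]
    [∀ i, Module k (W i)] (f : ∀ i, V →ₗ[k] W i) :
    finrank k (LinearMap.range (LinearMap.pi f)) ≤ ∑ i, finrank k (LinearMap.range (f i)) := by
  let inclusion : (∀ i, LinearMap.range (f i)) →ₗ[k] ∀ i, W i :=
    LinearMap.pi fun i => (LinearMap.range (f i)).subtype ∘ₗ LinearMap.proj i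
  have hle : LinearMap.range (LinearMap.pi f) ≤ LinearMap.range inclusion := by
    rintro _ ⟨v, rfl⟩
    exact ⟨fun i => ⟨f i v, v, rfl⟩, rfl⟩
  calc finrank k (LinearMap.range (LinearMap.pi f))
      ≤ finrank k (LinearMap.range inclusion) := Submodule.finrank_mono hle
    _ ≤ finrank k (∀ i, LinearMap.range (f i)) := inclusion.finrank_range_le
    _ = ∑ i, finrank k (LinearMap.range (f i)) := finrank_pi_fintype k

variable {K : Type} [Field K] {N t : ℕ} {I : Ideal (MvPolynomial (Fin N) K)}

lemma finrank_range_eq_hilbFn {W : Type*} [AddCommGroup W] [Module K W]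
    (f : homogeneousSubmodule (Fin N) K t →ₗ[K] W)
    (hf : ∀ F, f F = 0 ↔ (F : MvPolynomial (Fin N) K) ∈ I) :
    finrank K (LinearMap.range f) = hilbFn K I t := by
  have hker : LinearMap.ker f =
      (I.restrictScalars K).comap (homogeneousSubmodule (Fin N) K t).subtype := by
    ext F
    exact hf F
  rw [hilbFn, gradedDim, ← f.finrank_range_add_finrank_ker, hker, ← Submodule.map_comap_subtype,
    Submodule.finrank_map_subtype_eq, Nat.add_sub_cancel]

/-- Reduction modulo `I` of the forms of degree `t`; its range is the degree-`t` piece of the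
quotient ring, which avoids the truncated subtraction in `hilbFn`. -/
def formsMkQ (I : Ideal (MvPolynomial (Fin N) K)) (t : ℕ) :
    homogeneousSubmodule (Fin N) K t →ₗ[K] MvPolynomial (Fin N) K ⧸ I :=
  (Ideal.Quotient.mkₐ K I).toLinearMap ∘ₗ (homogeneousSubmodule (Fin N) K t).subtype

lemma formsMkQ_eq_zero_iff {F : homogeneousSubmodule (Fin N) K t} :
    formsMkQ I t F = 0 ↔ (F : MvPolynomial (Fin N) K) ∈ I :=
  Ideal.Quotient.eq_zero_iff_mem

lemma hilbFn_iInf_le {ι : Type*} [Fintype ι] (I : ι → Ideal (MvPolynomial (Fin N) K)) (t : ℕ) :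
    hilbFn K (⨅ i, I i) t ≤ ∑ i, hilbFn K (I i) t := by
  have hker (F : homogeneousSubmodule (Fin N) K t) :
      LinearMap.pi (fun i => formsMkQ (I i) t) F = 0 ↔
        (F : MvPolynomial (Fin N) K) ∈ ⨅ i, I i := by
    simp only [funext_iff, LinearMap.pi_apply, Pi.zero_apply, formsMkQ_eq_zero_iff, Ideal.mem_iInf]
  have hrange (i : ι) : finrank K (LinearMap.range (formsMkQ (I i) t)) = hilbFn K (I i) t :=
    finrank_range_eq_hilbFn _ fun _ => formsMkQ_eq_zero_iff
  rw [← finrank_range_eq_hilbFn _ hker]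
  simpa only [hrange] using finrank_range_pi_le fun i => formsMkQ (I i) t

lemma finrank_le_hilbFn {V : Type*} [AddCommGroup V] [Module K V]
    (f : V →ₗ[K] homogeneousSubmodule (Fin N) K t)
    (hf : ∀ v, (f v : MvPolynomial (Fin N) K) ∈ I → v = 0) : finrank K V ≤ hilbFn K I t := by
  rw [← finrank_range_eq_hilbFn (formsMkQ I t) fun _ => formsMkQ_eq_zero_iff]
  have hinj : Function.Injective ((formsMkQ I t).rangeRestrict ∘ₗ f) :=
    (injective_iff_map_eq_zero _).2 fun v hv =>
      hf v (formsMkQ_eq_zero_iff.1 (congrArg Subtype.val hv))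
  exact LinearMap.finrank_le_finrank_of_injective hinj

lemma hilbFn_lt_of_mem {F : MvPolynomial (Fin N) K} (hF0 : F ≠ 0) (hF : F.IsHomogeneous t)
    (hFI : F ∈ I) : hilbFn K I t < finrank K (homogeneousSubmodule (Fin N) K t) := by
  have hker : 0 < finrank K (LinearMap.ker (formsMkQ I t)) :=
    Submodule.one_le_finrank_iff.2 <| (Submodule.ne_bot_iff _).2
      ⟨⟨F, hF⟩, formsMkQ_eq_zero_iff.2 hFI, fun h => hF0 (congrArg Subtype.val h)⟩
  rw [← finrank_range_eq_hilbFn (formsMkQ I t) fun _ => formsMkQ_eq_zero_iff,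
    ← (formsMkQ I t).finrank_range_add_finrank_ker]
  exact Nat.lt_add_of_pos_right hker

end HilbertFunction

section PointIdeal

variable {K : Type} [Field K] {N s : ℕ} {q : Fin N → K}

lemma mem_pointIdeal_of_isHomogeneous_one {ℓ : MvPolynomial (Fin N) K} (hℓ : ℓ.IsHomogeneous 1)
    (hq : eval q ℓ = 0) : ℓ ∈ pointIdeal q :=
  Ideal.subset_span ⟨hℓ, hq⟩

lemma eval_eq_zero_of_mem_pointIdeal {f : MvPolynomial (Fin N) K} (hf : f ∈ pointIdeal q) :
    eval q f = 0 := by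
  have hle : pointIdeal q ≤ RingHom.ker (eval q) := Ideal.span_le.2 fun _ hg => hg.2
  exact hle hf

lemma eval_pderiv_eq_zero_of_mem_pointIdeal_sq {f : MvPolynomial (Fin N) K}
    (hf : f ∈ pointIdeal q ^ 2) (m : Fin N) : eval q (pderiv m f) = 0 := by
  rw [pow_two] at hf
  induction hf using Submodule.mul_induction_on' with
  | mem_mul_mem g hg h hh =>
    simp [eval_eq_zero_of_mem_pointIdeal hg, eval_eq_zero_of_mem_pointIdeal hh]
  | add g _ h _ hg hh => simp [hg, hh]

lemma exists_sub_pow_mul_mem_pointIdeal_sq {L : MvPolynomial (Fin N) K} (hL : L.IsHomogeneous 1)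
    (hLq : eval q L = 1) (t : ℕ) {F : MvPolynomial (Fin N) K} (hF : F.IsHomogeneous (t + 1)) :
    ∃ ℓ : MvPolynomial (Fin N) K, ℓ.IsHomogeneous 1 ∧ F - L ^ t * ℓ ∈ pointIdeal q ^ 2 := by
  induction t generalizing F with
  | zero => exact ⟨F, hF, by simp⟩
  | succ t ih =>
    rw [← mem_homogeneousSubmodule, ← homogeneousSubmodule_one_pow, pow_succ',
      homogeneousSubmodule_one_pow] at hF
    induction hF using Submodule.mul_induction_on' with
    | mem_mul_mem m hm G hG =>
      obtain ⟨ℓ, hℓ, hGℓ⟩ := ih hG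
      have hsub {k : MvPolynomial (Fin N) K} (hk : k.IsHomogeneous 1) :
          k - C (eval q k) * L ∈ pointIdeal q :=
        mem_pointIdeal_of_isHomogeneous_one (hk.sub (hL.C_mul _)) (by simp [hLq])
      -- The witness `w` is chosen so that `m ℓ - L w = (m - m(q) L) (ℓ - ℓ(q) L)`.
      refine ⟨C (eval q m) * ℓ + C (eval q ℓ) * m - C (eval q ℓ * eval q m) * L,
        ((hℓ.C_mul _).add (IsHomogeneous.C_mul hm _)).sub (hL.C_mul _), ?_⟩
      have hprod : (m - C (eval q m) * L) * (ℓ - C (eval q ℓ) * L) ∈ pointIdeal q ^ 2 := by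
        rw [pow_two]
        exact Ideal.mul_mem_mul (hsub hm) (hsub hℓ)
      convert (pointIdeal q ^ 2).add_mem (Ideal.mul_mem_left _ m hGℓ)
        (Ideal.mul_mem_left _ (L ^ t) hprod) using 1
      rw [C_mul]
      ring
    | add F _ G _ hF hG =>
      obtain ⟨ℓ, hℓ, hFℓ⟩ := hF
      obtain ⟨m, hm, hGm⟩ := hG
      refine ⟨ℓ + m, hℓ.add hm, ?_⟩
      convert (pointIdeal q ^ 2).add_mem hFℓ hGm using 1
      ring

lemma exists_isHomogeneous_one_eval_eq_one_of_ne_zero (hq : q ≠ 0) :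
    ∃ L : MvPolynomial (Fin N) K, L.IsHomogeneous 1 ∧ eval q L = 1 := by
  obtain ⟨L, hL, hLq, -⟩ := exists_isHomogeneous_one_eval_eq_one (q := q) (r := 0) (by simpa)
  exact ⟨L, hL, hLq⟩

lemma mem_pointIdeal_of_isHomogeneous (hq : q ≠ 0) {t : ℕ} {F : MvPolynomial (Fin N) K}
    (hF : F.IsHomogeneous (t + 1)) (hFq : eval q F = 0) : F ∈ pointIdeal q := by
  obtain ⟨L, hL, hLq⟩ := exists_isHomogeneous_one_eval_eq_one_of_ne_zero hq
  obtain ⟨ℓ, hℓ, hmem⟩ := exists_sub_pow_mul_mem_pointIdeal_sq hL hLq t hF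
  have hmem' := Ideal.pow_le_self two_ne_zero hmem
  have hℓq : eval q ℓ = 0 := by
    simpa [hFq, hLq] using eval_eq_zero_of_mem_pointIdeal hmem'
  have hpow : L ^ t * ℓ ∈ pointIdeal q :=
    Ideal.mul_mem_left _ _ (mem_pointIdeal_of_isHomogeneous_one hℓ hℓq)
  simpa using add_mem hmem' hpow

lemma eq_zero_of_mul_mem_pointIdeal_sq {H ℓ : MvPolynomial (Fin N) K} (hH : eval q H = 1)
    (hℓ : ℓ.IsHomogeneous 1) (hmem : H * ℓ ∈ pointIdeal q ^ 2) : ℓ = 0 := by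
  have hℓq : eval q ℓ = 0 := by
    simpa [hH] using eval_eq_zero_of_mem_pointIdeal (Ideal.pow_le_self two_ne_zero hmem)
  refine eq_zero_of_isHomogeneous_one hℓ (q := q) fun m => ?_
  simpa [hH, hℓq] using eval_pderiv_eq_zero_of_mem_pointIdeal_sq hmem m

lemma hilbFn_pointIdeal_sq_le (hq : q ≠ 0) (t : ℕ) :
    hilbFn K (pointIdeal q ^ 2) (t + 1) ≤ N := by
  obtain ⟨L, hL, hLq⟩ := exists_isHomogeneous_one_eval_eq_one_of_ne_zero hq
  let mulL : homogeneousSubmodule (Fin N) K 1 →ₗ[K] MvPolynomial (Fin N) K ⧸ pointIdeal q ^ 2 :=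
    (Ideal.Quotient.mkₐ K (pointIdeal q ^ 2)).toLinearMap ∘ₗ LinearMap.mulLeft K (L ^ t) ∘ₗ
      (homogeneousSubmodule (Fin N) K 1).subtype
  have hle : LinearMap.range (formsMkQ (pointIdeal q ^ 2) (t + 1)) ≤ LinearMap.range mulL := by
    rintro _ ⟨F, rfl⟩
    obtain ⟨ℓ, hℓ, hmem⟩ := exists_sub_pow_mul_mem_pointIdeal_sq hL hLq t F.2
    exact ⟨⟨ℓ, hℓ⟩, (Ideal.Quotient.eq.2 hmem).symm⟩
  calc hilbFn K (pointIdeal q ^ 2) (t + 1)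
      = finrank K (LinearMap.range (formsMkQ (pointIdeal q ^ 2) (t + 1))) :=
        (finrank_range_eq_hilbFn _ fun _ => formsMkQ_eq_zero_iff).symm
    _ ≤ finrank K (LinearMap.range mulL) := Submodule.finrank_mono hle
    _ ≤ finrank K (homogeneousSubmodule (Fin N) K 1) := mulL.finrank_range_le
    _ = N := by simp [finrank_homogeneousSubmodule]

lemma ProjDistinct.exists_isHomogeneous_mem_pointIdeal_sq {p : Fin (s + 1) → Fin N → K}
    (hp : ProjDistinct p) (i : Fin (s + 1)) :
    ∃ H : MvPolynomial (Fin N) K, H.IsHomogeneous (2 * s) ∧ eval (p i) H = 1 ∧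
      ∀ j ≠ i, H ∈ pointIdeal (p j) ^ 2 := by
  have hsep (j : Fin s) := exists_isHomogeneous_one_eval_eq_one
    (hp.2 i (i.succAbove j) (i.succAbove_ne j).symm)
  choose h hdeg hone hzero using hsep
  refine ⟨(∏ j, h j) ^ 2, ?_, by simp [map_prod, hone], fun j hj => ?_⟩
  · simpa [mul_comm] using (IsHomogeneous.prod Finset.univ h _ fun j _ => hdeg j).pow 2
  · obtain ⟨j, rfl⟩ := Fin.exists_succAbove_eq hj
    exact Ideal.pow_mem_pow (Ideal.mem_of_dvd _ (Finset.dvd_prod_of_mem h (Finset.mem_univ j))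
      (mem_pointIdeal_of_isHomogeneous_one (hdeg j) (hzero j))) 2

lemma ProjDistinct.hilbFn_fatIdeal_two {p : Fin (s + 1) → Fin N → K} (hp : ProjDistinct p) :
    hilbFn K (fatIdeal p fun _ => 2) (2 * s + 1) = (s + 1) * N := by
  apply le_antisymm
  · calc hilbFn K (fatIdeal p fun _ => 2) (2 * s + 1)
        ≤ ∑ i, hilbFn K (pointIdeal (p i) ^ 2) (2 * s + 1) := hilbFn_iInf_le _ _
      _ ≤ ∑ _i : Fin (s + 1), N :=
          Finset.sum_le_sum fun i _ => hilbFn_pointIdeal_sq_le (hp.1 i) _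
      _ = (s + 1) * N := by simp
  · choose H hdeg hone hmem using hp.exists_isHomogeneous_mem_pointIdeal_sq
    let combine : (Fin (s + 1) → homogeneousSubmodule (Fin N) K 1) →ₗ[K]
        homogeneousSubmodule (Fin N) K (2 * s + 1) :=
      LinearMap.codRestrict _ (∑ i, LinearMap.mulLeft K (H i) ∘ₗ
        (homogeneousSubmodule (Fin N) K 1).subtype ∘ₗ LinearMap.proj i) fun ℓ => by
        simpa using IsHomogeneous.sum Finset.univ _ _ fun i _ => (hdeg i).mul (ℓ i).2
    have hinj (ℓ) (hℓ : (combine ℓ : MvPolynomial (Fin N) K) ∈ fatIdeal p fun _ => 2) :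
        ℓ = 0 := by
      funext i
      have hsum : ∑ j, H j * (ℓ j : MvPolynomial (Fin N) K) ∈ pointIdeal (p i) ^ 2 := by
        simpa [combine] using Ideal.mem_iInf.1 hℓ i
      have hrest : ∑ j ∈ Finset.univ.erase i, H j * (ℓ j : MvPolynomial (Fin N) K) ∈
          pointIdeal (p i) ^ 2 :=
        sum_mem fun j hj => Ideal.mul_mem_right _ _ (hmem j i (Finset.ne_of_mem_erase hj).symm)
      rw [← Finset.add_sum_erase _ _ (Finset.mem_univ i)] at hsum
      exact Subtype.ext (eq_zero_of_mul_mem_pointIdeal_sq (hone i) (ℓ i).2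
        ((Ideal.add_mem_iff_left _ hrest).1 hsum))
    simpa [finrank_pi_fintype, finrank_homogeneousSubmodule] using finrank_le_hilbFn combine hinj

end PointIdeal

section HyperplaneAndCone

variable {K : Type} [Field K] {n s : ℕ}

lemma aeval_mem_pow_of_isHomogeneous {R S σ : Type*} [CommRing R] [CommRing S] [Algebra R S]
    {J : Ideal S} {L : σ → S} (hL : ∀ i, L i ∈ J) {t : ℕ} {q : MvPolynomial σ R}
    (hq : q.IsHomogeneous t) : aeval L q ∈ J ^ t := by
  have hle : (idealOfVars σ R).map (aeval L : MvPolynomial σ R →ₐ[R] S) ≤ J := by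
    rw [Ideal.map_le_iff_le_comap, idealOfVars, Ideal.span_le]
    rintro _ ⟨i, rfl⟩
    simpa using hL i
  have hmem : q ∈ idealOfVars σ R ^ t := (mem_pow_idealOfVars_iff t q).2 fun d hd =>
    (not_imp_comm.1 hq.coeff_eq_zero (mem_support_iff.1 hd)).ge
  exact Ideal.pow_right_mono hle t (Ideal.map_pow (aeval L : MvPolynomial σ R →ₐ[R] S) _ t ▸
    Ideal.mem_map_of_mem _ hmem)

lemma exists_matrix_mul_eq_one_mulVec_eq_zero (u v : Fin (n + 2) → K) :
    ∃ (A : Matrix (Fin n) (Fin (n + 2)) K) (B : Matrix (Fin (n + 2)) (Fin n) K),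
      A * B = 1 ∧ A.mulVec u = 0 ∧ A.mulVec v = 0 := by
  let W := Submodule.span K (Set.range ![u, v])
  have hW : finrank K W ≤ 2 := finrank_range_le_card ![u, v]
  have hquot : finrank K (Fin n → K) ≤ finrank K ((Fin (n + 2) → K) ⧸ W) := by
    have := W.finrank_quotient_add_finrank
    simp only [finrank_fin_fun] at this ⊢
    lia
  obtain ⟨j, hj⟩ := finrank_le_iff_exists_linearMap.1 hquot
  obtain ⟨π, hπ⟩ := j.exists_leftInverse_of_injective (LinearMap.ker_eq_bot.2 hj)
  obtain ⟨lift, hlift⟩ := W.mkQ.exists_rightInverse_of_surjective W.range_mkQ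
  have hkill {x : Fin (n + 2) → K} (hx : x ∈ W) :
      (LinearMap.toMatrix' (π ∘ₗ W.mkQ)).mulVec x = 0 := by
    simp [LinearMap.toMatrix'_mulVec, (Submodule.Quotient.mk_eq_zero W).2 hx]
  refine ⟨LinearMap.toMatrix' (π ∘ₗ W.mkQ), LinearMap.toMatrix' (lift ∘ₗ j), ?_,
    hkill (Submodule.subset_span ⟨0, rfl⟩), hkill (Submodule.subset_span ⟨1, rfl⟩)⟩
  rw [← LinearMap.toMatrix'_comp, LinearMap.comp_assoc, ← LinearMap.comp_assoc _ lift, hlift,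
    LinearMap.id_comp, hπ, LinearMap.toMatrix'_id]

lemma exists_quadric_mem_pointIdeal_sq {ι : Type*} [Fintype ι] (u v : Fin (n + 2) → K)
    (x : ι → Fin (n + 2) → K) (hι : Fintype.card ι < (n + 1).choose 2) :
    ∃ Q : MvPolynomial (Fin (n + 2)) K, Q ≠ 0 ∧ Q.IsHomogeneous 2 ∧ Q ∈ pointIdeal u ^ 2 ∧
      Q ∈ pointIdeal v ^ 2 ∧ ∀ i, eval (x i) Q = 0 := by
  obtain ⟨A, B, hAB, hAu, hAv⟩ := exists_matrix_mul_eq_one_mulVec_eq_zero u v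
  obtain ⟨q, hq0, hq, hqx⟩ := exists_isHomogeneous_ne_zero_of_card_lt (t := 2)
    (fun i => A.mulVec (x i)) hι
  have hmem {w : Fin (n + 2) → K} (hw : A.mulVec w = 0) :
      bind₁ A.toMvPolynomial q ∈ pointIdeal w ^ 2 :=
    aeval_mem_pow_of_isHomogeneous (fun i => mem_pointIdeal_of_isHomogeneous_one
      (A.toMvPolynomial_isHomogeneous i) (by simp [Matrix.toMvPolynomial_eval_eq_apply, hw])) hq
  refine ⟨bind₁ A.toMvPolynomial q, fun hQ => hq0 ?_, ?_, hmem hAu, hmem hAv, fun i => ?_⟩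
  · calc q = bind₁ (A * B).toMvPolynomial q := by
          rw [hAB, Matrix.toMvPolynomial_one, bind₁_X_left, AlgHom.id_apply]
      _ = bind₁ B.toMvPolynomial (bind₁ A.toMvPolynomial q) := by
          rw [bind₁_bind₁]
          exact congrArg (bind₁ · q) (funext (Matrix.toMvPolynomial_mul A B))
      _ = 0 := by rw [hQ, map_zero]
  · simpa using hq.aeval _ A.toMvPolynomial_isHomogeneous
  · have heval : (fun k => aeval (x i) (A.toMvPolynomial k)) = A.mulVec (x i) := by
      simp only [aeval_eq_eval, Matrix.toMvPolynomial_eval_eq_apply]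
    have hbind := aeval_bind₁ (x i) A.toMvPolynomial q
    rwa [heval, aeval_eq_eval, aeval_eq_eval, hqx] at hbind

lemma exists_cubic_mem_fatIdeal_two_of_hyperplane {p : Fin s → Fin (n + 2) → K}
    (hp : ∀ i, p i ≠ 0) (hs : s < (n + 1).choose 2 + 2) {u v : Fin s} (huv : u ≠ v)
    {φ : Dual K (Fin (n + 2) → K)} (hφ : φ ≠ 0) (hvanish : ∀ i, i ≠ u → i ≠ v → φ (p i) = 0) :
    ∃ F : MvPolynomial (Fin (n + 2)) K, F ≠ 0 ∧ F.IsHomogeneous 3 ∧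
      F ∈ fatIdeal p fun _ => 2 := by
  obtain ⟨ℓ, hℓ, hℓφ⟩ := exists_isHomogeneous_one_eval_eq φ
  have hℓ0 : ℓ ≠ 0 := by
    rintro rfl
    exact hφ (LinearMap.ext fun x => by simp [← hℓφ])
  have hcard : Fintype.card {i // i ≠ u ∧ i ≠ v} < (n + 1).choose 2 := by
    have : Fintype.card {i // i ≠ u ∧ i ≠ v} = s - 2 := by
      rw [Fintype.card_subtype]
      simp [Finset.filter_and, Finset.filter_ne', Finset.card_erase_of_mem, huv, Nat.sub_sub]
    lia
  obtain ⟨Q, hQ0, hQ, hQu, hQv, hQp⟩ := exists_quadric_mem_pointIdeal_sq (p u) (p v)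
    (fun i : {i // i ≠ u ∧ i ≠ v} => p i) hcard
  refine ⟨ℓ * Q, mul_ne_zero hℓ0 hQ0, hℓ.mul hQ, Ideal.mem_iInf.2 fun i => ?_⟩
  by_cases hiu : i = u
  · exact Ideal.mul_mem_left _ _ (hiu ▸ hQu)
  by_cases hiv : i = v
  · exact Ideal.mul_mem_left _ _ (hiv ▸ hQv)
  rw [pow_two]
  exact Ideal.mul_mem_mul
    (mem_pointIdeal_of_isHomogeneous_one hℓ ((hℓφ _).trans (hvanish i hiu hiv)))
    (mem_pointIdeal_of_isHomogeneous (hp i) hQ (hQp ⟨i, hiu, hiv⟩))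

end HyperplaneAndCone

section DeterminantalForms

lemma det_add_vecMulVec_mem_pow {R n : Type*} [CommRing R] [Fintype n] [DecidableEq n]
    {J : Ideal R} {M : Matrix n n R} (hM : ∀ i j, M i j ∈ J) (u v : n → R) :
    (M + Matrix.vecMulVec u v).det ∈ J ^ (Fintype.card n - 1) := by
  let border : Matrix (Unit ⊕ n) (Unit ⊕ n) R :=
    Matrix.fromBlocks 1 (Matrix.replicateRow Unit v) (-Matrix.replicateCol Unit u) M
  have hborder : (M + Matrix.vecMulVec u v).det = border.det := by
    rw [Matrix.det_fromBlocks_one₁₁, Matrix.vecMulVec_eq Unit, Matrix.neg_mul, sub_neg_eq_add]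
  rw [hborder, Matrix.det_apply']
  -- All but at most one of the columns `inr j` contribute to each term a factor from the block `M`.
  refine sum_mem fun σ _ => Ideal.mul_mem_left _ _ ?_
  rw [Fintype.prod_sum_type]
  apply Ideal.mul_mem_left
  let inside : Finset n := {j | σ (.inr j) ≠ .inl ()}
  have hmem (j) (hj : j ∈ inside) : border (σ (.inr j)) (.inr j) ∈ J := by
    obtain ⟨⟨⟩, hi⟩ | ⟨i, hi⟩ : (∃ i, σ (.inr j) = .inl i) ∨ ∃ i, σ (.inr j) = .inr i := by
      cases σ (.inr j) <;> simp
    · exact absurd hi (Finset.mem_filter_univ j |>.1 hj)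
    · rw [hi]
      exact hM i j
  have hcard : Fintype.card n - 1 ≤ inside.card := by
    have hle : ({j | σ (.inr j) = .inl ()} : Finset n).card ≤ 1 :=
      Finset.card_le_one.2 fun i hi j hj => Sum.inr_injective <| σ.injective <|
        ((Finset.mem_filter_univ i).1 hi).trans ((Finset.mem_filter_univ j).1 hj).symm
    have hadd := Finset.card_filter_add_card_filter_not (s := Finset.univ)
      fun j => σ (.inr j) = .inl ()
    rw [Finset.card_univ] at hadd
    simp only [inside]
    lia
  have hprod : ∏ j ∈ inside, border (σ (.inr j)) (.inr j) ∈ J ^ inside.card := by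
    simpa using Ideal.prod_mem_prod hmem
  exact Ideal.mem_of_dvd _ (Finset.prod_dvd_prod_of_subset _ _ _ inside.subset_univ)
    (Ideal.pow_le_pow_right hcard hprod)

variable {K : Type} [Field K] {N : ℕ} {n : Type*} [Fintype n] [DecidableEq n]

lemma exists_isHomogeneous_eval_eq_det (S : (Fin N → K) →ₗ[K] Matrix n n K) :
    ∃ F : MvPolynomial (Fin N) K, F.IsHomogeneous (Fintype.card n) ∧
      (∀ x, eval x F = (S x).det) ∧ ∀ q ≠ 0, ∀ u v, S q = Matrix.vecMulVec u v →
        F ∈ pointIdeal q ^ (Fintype.card n - 1) := by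
  have hentry (i j : n) := exists_isHomogeneous_one_eval_eq
    (Matrix.entryLinearMap K K i j ∘ₗ S)
  choose Φ hΦ hΦS using hentry
  refine ⟨(Matrix.of Φ).det, ?_, fun x => ?_, fun q hq u v hS => ?_⟩
  · rw [Matrix.det_apply, ← mem_homogeneousSubmodule]
    refine sum_mem fun σ _ => zsmul_mem ?_ (σ.sign : ℤ)
    simpa using IsHomogeneous.prod Finset.univ (fun i => Φ (σ i) i) _ fun i _ => hΦ (σ i) i
  · rw [RingHom.map_det]
    exact congrArg Matrix.det (Matrix.ext fun i j => hΦS i j x)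
  · obtain ⟨L, hL, hLq⟩ := exists_isHomogeneous_one_eval_eq_one_of_ne_zero hq
    let U (i : n) : MvPolynomial (Fin N) K := C (u i) * L
    let V (j : n) : MvPolynomial (Fin N) K := C (v j)
    have hmem (i j : n) : (Matrix.of Φ - Matrix.vecMulVec U V) i j ∈ pointIdeal q := by
      refine mem_pointIdeal_of_isHomogeneous_one ((hΦ i j).sub ?_) ?_
      · have hlin : (V j * U i).IsHomogeneous 1 := (hL.C_mul _).C_mul _
        rwa [mul_comm] at hlin
      · simp [U, V, Matrix.vecMulVec_apply, hΦS, hS, hLq]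
    simpa only [sub_add_cancel] using det_add_vecMulVec_mem_pow hmem U V

end DeterminantalForms

section RationalNormalCurve

variable {K : Type*} [Field K] {k m : ℕ}

lemma det_projVandermonde_ne_zero {a b : Fin m → K} (h : ∀ i j, i ≠ j → a i * b j ≠ a j * b i) :
    (Matrix.projVandermonde a b).det ≠ 0 := by
  rw [Matrix.det_projVandermonde]
  exact Finset.prod_ne_zero_iff.2 fun i _ => Finset.prod_ne_zero_iff.2 fun j hj =>
    sub_ne_zero.2 (h j i (Finset.mem_Ioi.1 hj).ne')

lemma exists_ne_zero_sum_mul_pow_mul_pow_eq_zero {a b : Fin (m + 1) → K}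
    (h : ∀ i j, i ≠ j → a i * b j ≠ a j * b i) :
    ∃ w : Fin (m + 1) → K, (∀ i, w i ≠ 0) ∧
      ∀ e f, e + f + 1 = m → ∑ i, w i * (a i ^ e * b i ^ f) = 0 := by
  have hker : LinearMap.ker (Matrix.rectVandermonde a b m).vecMulLinear ≠ ⊥ :=
    LinearMap.ker_ne_bot_of_finrank_lt (by simp)
  obtain ⟨w, hw, hw0⟩ := Submodule.exists_mem_ne_zero_of_ne_bot hker
  have hsum (j : Fin m) : ∑ i, w i * (a i ^ (j : ℕ) * b i ^ (j.rev : ℕ)) = 0 := congrFun hw j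
  refine ⟨w, fun i hi => hw0 ?_, fun e f hef => ?_⟩
  · have hrest : w ∘ i.succAbove = 0 := by
      refine Matrix.eq_zero_of_vecMul_eq_zero (det_projVandermonde_ne_zero
        (a := a ∘ i.succAbove) (b := b ∘ i.succAbove) fun r s hrs =>
          h _ _ (i.succAbove_right_injective.ne hrs)) (funext fun j => ?_)
      have hj := hsum j
      rwa [Fin.sum_univ_succAbove _ i, hi, zero_mul, zero_add] at hj
    refine funext fun j => ?_
    obtain rfl | ⟨j, rfl⟩ := i.eq_self_or_eq_succAbove j
    · exact hi
    · exact congrFun hrest j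
  · have hrev : m - (e + 1) = f := by lia
    simpa [Fin.val_rev, hrev] using hsum ⟨e, by lia⟩

lemma exists_eq_vecMulVec_of_apply_eq_zero {n : Type*} {M : Matrix n n K} (i : n)
    (h : ∀ r s, ¬(r = i ∧ s = i) → M r s = 0) : ∃ u v, M = Matrix.vecMulVec u v := by
  classical
  refine ⟨Pi.single i (M i i), Pi.single i 1, Matrix.ext fun r s => ?_⟩
  by_cases hrs : r = i ∧ s = i
  · simp [Matrix.vecMulVec_apply, hrs]
  · rw [h r s hrs]
    rcases not_and_or.1 hrs with hr | hs
    · simp [Matrix.vecMulVec_apply, hr]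
    · simp [Matrix.vecMulVec_apply, hs]

variable {E : Type*} [AddCommGroup E] [Module K E]

/-- The linear map sending the `i`-th basis vector to `c i • v vᵀ`, where
`v = (aᵢᵏ, aᵢᵏ⁻¹bᵢ, …, bᵢᵏ)`. For nonzero `c i` and pairwise nonproportional `(a i, b i)`, the
points it sends to matrices of rank one form a rational normal curve, and its determinant vanishes
on the variety of secant `(k - 1)`-planes of that curve. -/
def secantMatrix (B : Basis (Fin (2 * k + 1)) K E) (c a b : Fin (2 * k + 1) → K) :
    E →ₗ[K] Matrix (Fin (k + 1)) (Fin (k + 1)) K :=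
  B.constr K fun i => Matrix.vecMulVec (c i • Matrix.rectVandermonde b a (k + 1) i)
    (Matrix.rectVandermonde b a (k + 1) i)

lemma secantMatrix_apply (B : Basis (Fin (2 * k + 1)) K E) (c a b : Fin (2 * k + 1) → K) (x : E)
    (r s : Fin (k + 1)) : secantMatrix B c a b x r s =
      ∑ i, B.repr x i * c i * (b i ^ (r + s : ℕ) * a i ^ (2 * k - (r + s) : ℕ)) := by
  have hrev : 2 * k - (r + s : ℕ) = (r.rev : ℕ) + s.rev := by
    simp only [Fin.val_rev]
    lia
  rw [secantMatrix, Basis.constr_apply_fintype, Matrix.sum_apply, hrev]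
  refine Finset.sum_congr rfl fun i _ => ?_
  simp only [Matrix.smul_apply, Matrix.vecMulVec_apply, Pi.smul_apply, smul_eq_mul,
    Matrix.rectVandermonde_apply, Basis.equivFun_apply]
  ring

lemma exists_det_secantMatrix_ne_zero (B : Basis (Fin (2 * k + 1)) K E)
    {c a b : Fin (2 * k + 1) → K} (hc : ∀ i, c i ≠ 0)
    (hab : ∀ i j, i ≠ j → a i * b j ≠ a j * b i) : ∃ x, (secantMatrix B c a b x).det ≠ 0 := by
  let ι : Fin (k + 1) → Fin (2 * k + 1) := Fin.castLE (by lia)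
  let V := Matrix.projVandermonde (b ∘ ι) (a ∘ ι)
  have hfactor : secantMatrix B c a b (∑ i, B (ι i)) =
      V.transpose * Matrix.diagonal (c ∘ ι) * V := by
    ext r s
    rw [map_sum, Matrix.sum_apply, Matrix.mul_apply]
    refine Finset.sum_congr rfl fun i _ => ?_
    rw [secantMatrix, Basis.constr_basis, Matrix.mul_diagonal]
    exact congrArg (· * V i s) (mul_comm (c (ι i)) (V i r))
  have hV : V.det ≠ 0 := det_projVandermonde_ne_zero fun i j hij => by
    simpa [mul_comm] using (hab (ι j) (ι i) ((Fin.castLE_injective _).ne hij.symm))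
  refine ⟨∑ i, B (ι i), ?_⟩
  rw [hfactor, Matrix.det_mul, Matrix.det_mul, Matrix.det_transpose, Matrix.det_diagonal]
  exact mul_ne_zero (mul_ne_zero hV (Finset.prod_ne_zero_iff.2 fun i _ => hc _)) hV

lemma exists_linearMap_matrix_rankOne (B : Basis (Fin (2 * k + 1)) K E) {x y : E}
    (hx : ∀ i, B.repr x i ≠ 0) (hy : ∀ i, B.repr y i ≠ 0)
    (hxy : ∀ i j, i ≠ j → B.repr x i * B.repr y j ≠ B.repr x j * B.repr y i) :
    ∃ S : E →ₗ[K] Matrix (Fin (k + 1)) (Fin (k + 1)) K, (∃ z, (S z).det ≠ 0) ∧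
      (∀ i, ∃ u v, S (B i) = Matrix.vecMulVec u v) ∧ (∃ u v, S x = Matrix.vecMulVec u v) ∧
      ∃ u v, S y = Matrix.vecMulVec u v := by
  obtain ⟨w, hw0, hw⟩ := exists_ne_zero_sum_mul_pow_mul_pow_eq_zero
    (a := B.repr y) (b := B.repr x) fun i j hij => by simpa [mul_comm] using (hxy j i hij.symm)
  -- With these weights the `(r, s)` entry of the matrix at `x = ∑ xᵢ Bᵢ` is
  -- `∑ wᵢ yᵢ ^ (r + s - 1) * xᵢ ^ (2k - r - s)`, which vanishes when `0 < r + s`; dually for `y`.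
  refine ⟨secantMatrix B (fun i => w i / (B.repr x i * B.repr y i)) (B.repr x) (B.repr y),
    exists_det_secantMatrix_ne_zero B
      (fun i => div_ne_zero (hw0 i) (mul_ne_zero (hx i) (hy i))) hxy,
    fun i => ⟨_, _, B.constr_basis K _ i⟩, ?_, ?_⟩
  · refine exists_eq_vecMulVec_of_apply_eq_zero 0 fun r s hrs => ?_
    rw [secantMatrix_apply]
    obtain ⟨d, hd⟩ : ∃ d, (r + s : ℕ) = d + 1 :=
      Nat.exists_eq_succ_of_ne_zero fun h0 => hrs (by
        simp only [Fin.ext_iff, Fin.val_zero]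
        lia)
    rw [hd, ← hw d (2 * k - (d + 1)) (by lia)]
    refine Finset.sum_congr rfl fun i _ => ?_
    have hxi := hx i
    have hyi := hy i
    field_simp
    ring
  · refine exists_eq_vecMulVec_of_apply_eq_zero (Fin.last k) fun r s hrs => ?_
    rw [secantMatrix_apply]
    obtain ⟨d, hd⟩ : ∃ d, 2 * k - (r + s : ℕ) = d + 1 :=
      Nat.exists_eq_succ_of_ne_zero fun h0 => hrs (by
        simp only [Fin.ext_iff, Fin.val_last]
        lia)
    rw [hd, ← hw (r + s) d (by lia)]
    refine Finset.sum_congr rfl fun i _ => ?_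
    have hxi := hx i
    have hyi := hy i
    field_simp
    ring

end RationalNormalCurve

section GeneralPosition

variable {K : Type} [Field K] {N k : ℕ}

/-- Linear general position of `N + 2` points of `ℙᴺ⁻¹`: no hyperplane contains all but two of
them. -/
def InLinearGeneralPosition (p : Fin (N + 2) → Fin N → K) : Prop :=
  ∀ u v, u ≠ v → ∀ φ : Dual K (Fin N → K), (∀ i, i ≠ u → i ≠ v → φ (p i) = 0) → φ = 0

namespace InLinearGeneralPosition

lemma exists_basis {p : Fin (N + 2) → Fin N → K} (hp : InLinearGeneralPosition p) :
    ∃ B : Basis (Fin N) K (Fin N → K), ∀ i, B i = p (i.castAdd 2) := by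
  have hspan : ⊤ ≤ Submodule.span K (Set.range fun i : Fin N => p (i.castAdd 2)) := by
    by_contra hlt
    obtain ⟨φ, hφ0, hφ⟩ := Submodule.exists_le_ker_of_lt_top _
      (lt_top_iff_ne_top.2 fun heq => hlt heq.ge)
    refine hφ0 (hp (Fin.natAdd N 0) (Fin.natAdd N 1) (by simp) φ fun i hi₀ hi₁ => ?_)
    induction i using Fin.addCases with
    | left i => exact hφ (Submodule.subset_span ⟨i, rfl⟩)
    | right i => fin_cases i <;> contradiction
  exact ⟨basisOfTopLeSpanOfCardEqFinrank _ hspan (by simp), fun i => by simp⟩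

variable {p : Fin (N + 2) → Fin N → K} {B : Basis (Fin N) K (Fin N → K)}

lemma repr_ne_zero (hp : InLinearGeneralPosition p) (hB : ∀ i, B i = p (i.castAdd 2))
    (a : Fin 2) (i : Fin N) : B.repr (p (Fin.natAdd N a)) i ≠ 0 := by
  intro hzero
  have hcoord : B.coord i = 0 := by
    have hne : i.castAdd 2 ≠ Fin.natAdd N (a + 1) :=
      Fin.ne_of_lt (i.2.trans_le (Nat.le_add_right N _))
    refine hp _ _ hne _ fun l hl hla => ?_
    induction l using Fin.addCases with
    | left l =>
      rw [← hB, B.coord_apply, B.repr_self_apply, if_neg (ne_of_apply_ne _ hl)]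
    | right l =>
      obtain rfl : l = a := by
        have hrev : l ≠ a + 1 := ne_of_apply_ne _ hla
        lia
      exact hzero
  simpa using LinearMap.congr_fun hcoord (B i)

lemma repr_mul_repr_ne (hp : InLinearGeneralPosition p) (hB : ∀ i, B i = p (i.castAdd 2))
    {i j : Fin N} (hij : i ≠ j) :
    B.repr (p (Fin.natAdd N 0)) i * B.repr (p (Fin.natAdd N 1)) j ≠
      B.repr (p (Fin.natAdd N 0)) j * B.repr (p (Fin.natAdd N 1)) i := by
  intro heq
  let x := p (Fin.natAdd N 0)
  have hφ : B.repr x j • B.coord i - B.repr x i • B.coord j = 0 := by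
    refine hp (i.castAdd 2) (j.castAdd 2) (by simpa using hij) _ fun l hli hlj => ?_
    induction l using Fin.addCases with
    | left l =>
      have hli' : l ≠ i := ne_of_apply_ne _ hli
      have hlj' : l ≠ j := ne_of_apply_ne _ hlj
      simp [← hB, hli', hlj']
    | right l =>
      obtain rfl | rfl : l = 0 ∨ l = 1 := by lia
      · simp [x, mul_comm]
      · simp [x, heq]
  refine hp.repr_ne_zero hB 0 j ?_
  simpa [hij] using LinearMap.congr_fun hφ (B i)

lemma exists_mem_fatIdeal {p : Fin (2 * k + 1 + 2) → Fin (2 * k + 1) → K}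
    (hp : InLinearGeneralPosition p) (hp0 : ∀ i, p i ≠ 0) :
    ∃ F : MvPolynomial (Fin (2 * k + 1)) K, F ≠ 0 ∧ F.IsHomogeneous (k + 1) ∧
      F ∈ fatIdeal p fun _ => k := by
  obtain ⟨B, hB⟩ := hp.exists_basis
  obtain ⟨S, ⟨z, hz⟩, hSB, hSx, hSy⟩ := exists_linearMap_matrix_rankOne B
    (hp.repr_ne_zero hB 0) (hp.repr_ne_zero hB 1) fun i j => hp.repr_mul_repr_ne hB
  obtain ⟨F, hF, hFdet, hFmem⟩ := exists_isHomogeneous_eval_eq_det S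
  rw [Fintype.card_fin] at hF hFmem
  have hrank (i) : ∃ u v, S (p i) = Matrix.vecMulVec u v := by
    induction i using Fin.addCases with
    | left i => exact hB i ▸ hSB i
    | right i => fin_cases i <;> assumption
  refine ⟨F, fun hF0 => hz ?_, hF, Ideal.mem_iInf.2 fun i => ?_⟩
  · rw [← hFdet, hF0, map_zero]
  · obtain ⟨u, v, huv⟩ := hrank i
    exact hFmem _ (hp0 i) u v huv

end InLinearGeneralPosition

end GeneralPosition

lemma exists_cubic_mem_fatIdeal_two {K : Type} [Field K] {p : Fin 7 → Fin 5 → K}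
    (hp : ∀ i, p i ≠ 0) :
    ∃ F : MvPolynomial (Fin 5) K, F ≠ 0 ∧ F.IsHomogeneous 3 ∧ F ∈ fatIdeal p fun _ => 2 := by
  by_cases hpos : InLinearGeneralPosition p
  · exact hpos.exists_mem_fatIdeal (k := 2) hp
  · simp only [InLinearGeneralPosition, not_forall] at hpos
    obtain ⟨u, v, huv, φ, hvanish, hφ⟩ := hpos
    exact exists_cubic_mem_fatIdeal_two_of_hyperplane hp (by decide) huv hφ hvanish

theorem stmt9_general {K : Type} [Field K] (p : Fin 7 → Fin 5 → K) (hdist : ProjDistinct p) :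
    4 ≤ regFat K p (fun _ => 2) := by
  have hmult : fatMult 4 (fun _ : Fin 7 => 2) = 35 := by decide
  have hattained : {t | hilbFn K (fatIdeal p fun _ => 2) t = 35}.Nonempty :=
    ⟨13, hdist.hilbFn_fatIdeal_two⟩
  obtain ⟨F, hF0, hF, hFmem⟩ := exists_cubic_mem_fatIdeal_two hdist.1
  rw [regFat, hmult]
  refine le_csInf hattained fun t (ht : hilbFn K _ t = 35) => ?_
  by_contra! hlt
  have hforms : finrank K (homogeneousSubmodule (Fin 5) K t) = (5 + t - 1).choose t :=
    finrank_homogeneousSubmodule K 5 t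
  obtain rfl | ht2 : t = 3 ∨ t ≤ 2 := by lia
  · have hcubic := hilbFn_lt_of_mem hF0 hF hFmem
    simp [ht, hforms, Nat.choose] at hcubic
  · have hle : hilbFn K (fatIdeal p fun _ => 2) t ≤ _ := Nat.sub_le _ _
    rw [ht, hforms] at hle
    interval_cases t <;> simp [Nat.choose] at hle

/-- Lemma 4.1: seven non-degenerate double points in `ℙ⁴` have `reg(Z) ≥ 4`. -/
theorem stmt9 {K : Type} [Field K] [IsAlgClosed K]
    (p : Fin 7 → Fin 5 → K) (hdist : ProjDistinct p)
    (hspan : Submodule.span K (Set.range p) = ⊤) :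
    4 ≤ regFat K p (fun _ => 2) :=
  stmt9_general p hdist
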